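/- The explainer L_dc satisfies Feasibility, Validity, Success, Irreducibility and Strong Irreducibility, and it violates Coherence, Completeness, Strong Completeness, Monotonicity and Counter-Monotonicity. -/

import Mathlib

/-- A classification theory: a finite set of features, a finite domain (with at
least two values) for each feature, and a finite set of at least two classes. -/
structure CTheory where
  F : Finset ℕ
  dom : ℕ → Finset ℕ
  dom_nontrivial : ∀ f ∈ F, 1 < (dom f).card
  C : Finset ℕ
  C_nontrivial : 2 ≤ C.card

/-- A literal of a theory is a pair (feature, value) with the value in the
feature's domain. -/
def IsLiteral (T : CTheory) (l : ℕ × ℕ) : Prop :=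
  l.1 ∈ T.F ∧ l.2 ∈ T.dom l.1

/-- A set of literals is consistent iff no feature gets two distinct values. -/
def ConsistentLits (S : Set (ℕ × ℕ)) : Prop :=
  ∀ l ∈ S, ∀ l' ∈ S, l.1 = l'.1 → l.2 = l'.2

/-- A partial assignment: a consistent set of literals (each feature occurs at
most once). -/
def IsPartialAssignment (T : CTheory) (E : Set (ℕ × ℕ)) : Prop :=
  (∀ l ∈ E, IsLiteral T l) ∧ ConsistentLits E

/-- An instance: a partial assignment in which every feature occurs (exactly) once. -/
def IsInstance (T : CTheory) (x : Set (ℕ × ℕ)) : Prop :=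
  IsPartialAssignment T x ∧ ∀ f ∈ T.F, ∃ v, (f, v) ∈ x

/-- The feature space of a theory: the set of all its instances. -/
def FeatureSpace (T : CTheory) : Set (Set (ℕ × ℕ)) := {x | IsInstance T x}

/-- A classifier maps every instance to a class. -/
def IsClassifier (T : CTheory) (κ : Set (ℕ × ℕ) → ℕ) : Prop :=
  ∀ x ∈ FeatureSpace T, κ x ∈ T.C

/-- A question (T, κ, D, x): κ is a classifier on T, D ⊆ F(T) and x ∈ D. -/
def IsQuestion (T : CTheory) (κ : Set (ℕ × ℕ) → ℕ)
    (D : Set (Set (ℕ × ℕ))) (x : Set (ℕ × ℕ)) : Prop :=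
  IsClassifier T κ ∧ D ⊆ FeatureSpace T ∧ x ∈ D

/-- An explainer maps every question (T, κ, D, x) to a set of sets of literals. -/
abbrev Explainer :=
  CTheory → (Set (ℕ × ℕ) → ℕ) → Set (Set (ℕ × ℕ)) → Set (ℕ × ℕ) → Set (Set (ℕ × ℕ))

/-- An explainer returns, on every question over T, a subset of E(T)
(the partial assignments of T). -/
def IsExplainer (L : Explainer) : Prop :=
  ∀ T κ D x, IsQuestion T κ D x → ∀ E ∈ L T κ D x, IsPartialAssignment T E

/-- Feasibility: every explanation is part of the instance being explained. -/
def Feasibility (L : Explainer) : Prop :=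
  ∀ T κ D x, IsQuestion T κ D x → ∀ E ∈ L T κ D x, E ⊆ x

/-- Validity: no explanation is contradicted within the dataset. -/
def Validity (L : Explainer) : Prop :=
  ∀ T κ D x, IsQuestion T κ D x → ∀ E ∈ L T κ D x,
    ¬ ∃ y ∈ D, E ⊆ y ∧ κ y ≠ κ x

/-- Success: every question receives at least one explanation. -/
def Success (L : Explainer) : Prop :=
  ∀ T κ D x, IsQuestion T κ D x → (L T κ D x).Nonempty

/-- Coherence: explanations of instances with distinct classes are jointly
inconsistent. -/
def Coherence (L : Explainer) : Prop :=
  ∀ T κ D x x', IsQuestion T κ D x → IsQuestion T κ D x' → κ x ≠ κ x' →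
    ∀ E ∈ L T κ D x, ∀ E' ∈ L T κ D x', ¬ ConsistentLits (E ∪ E')

/-- Irreducibility: no literal of an explanation can be removed
(witnessed in the dataset). -/
def Irreducibility (L : Explainer) : Prop :=
  ∀ T κ D x, IsQuestion T κ D x → ∀ E ∈ L T κ D x, ∀ l ∈ E,
    ∃ x' ∈ D, κ x' ≠ κ x ∧ E \ {l} ⊆ x'

/-- Strong Irreducibility: no literal of an explanation can be removed
(witnessed in the feature space). -/
def StrongIrreducibility (L : Explainer) : Prop :=
  ∀ T κ D x, IsQuestion T κ D x → ∀ E ∈ L T κ D x, ∀ l ∈ E,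
    ∃ x' ∈ FeatureSpace T, κ x' ≠ κ x ∧ E \ {l} ⊆ x'

/-- Completeness: every omitted candidate is invalidated within the dataset. -/
def Completeness (L : Explainer) : Prop :=
  ∀ T κ D x, IsQuestion T κ D x → ∀ E ⊆ x, E ∉ L T κ D x →
    ∃ y ∈ D, E ⊆ y ∧ κ y ≠ κ x

/-- Strong Completeness: every omitted candidate is invalidated within the
feature space. -/
def StrongCompleteness (L : Explainer) : Prop :=
  ∀ T κ D x, IsQuestion T κ D x → ∀ E ⊆ x, E ∉ L T κ D x →
    ∃ y ∈ FeatureSpace T, E ⊆ y ∧ κ y ≠ κ x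

/-- Monotonicity: enlarging the dataset preserves explanations. -/
def Monotonicity (L : Explainer) : Prop :=
  ∀ T κ D D' x, IsQuestion T κ D x → IsQuestion T κ D' x → D ⊆ D' →
    L T κ D x ⊆ L T κ D' x

/-- Counter-Monotonicity: enlarging the dataset can only discard explanations. -/
def CounterMonotonicity (L : Explainer) : Prop :=
  ∀ T κ D D' x, IsQuestion T κ D x → IsQuestion T κ D' x → D ⊆ D' →
    L T κ D' x ⊆ L T κ D x

/-- The explainer L_dw returning all weak abductive explanations (dwAXp's):
E ⊆ x and every y ∈ D containing E has the same class as x. -/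
def Ldw : Explainer := fun _T κ D x =>
  {E | E ⊆ x ∧ ∀ y ∈ D, E ⊆ y → κ y = κ x}

/-- The explainer L_w returning the weak abductive explanations computed on the
whole feature space. -/
def Lw : Explainer := fun T κ _D x => Ldw T κ (FeatureSpace T) x

/-- The explainer L_dc returning the subset-minimal weak abductive explanations
(concise abductive explanations). -/
def Ldc : Explainer := fun T κ D x =>
  {E | E ∈ Ldw T κ D x ∧ ∀ E' ∈ Ldw T κ D x, E' ⊆ E → E' = E}

/-- A set X of partial assignments is coherent under (D, κ): no two of its
members are consistent together while being contained in instances of D with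
distinct classes. -/
def CoherentSet (κ : Set (ℕ × ℕ) → ℕ) (D : Set (Set (ℕ × ℕ)))
    (X : Set (Set (ℕ × ℕ))) : Prop :=
  ¬ ∃ E ∈ X, ∃ E' ∈ X, ConsistentLits (E ∪ E') ∧
      ∃ y ∈ D, ∃ z ∈ D, E ⊆ y ∧ E' ⊆ z ∧ κ y ≠ κ z

/-- An envelope under (D, κ): a coherent set of dwAXp's covering every instance
of D. -/
def IsEnvelope (T : CTheory) (κ : Set (ℕ × ℕ) → ℕ) (D : Set (Set (ℕ × ℕ)))
    (X : Set (Set (ℕ × ℕ))) : Prop :=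
  (∀ E ∈ X, IsPartialAssignment T E) ∧
  CoherentSet κ D X ∧
  (∀ E ∈ X, ∃ x ∈ D, E ∈ Ldw T κ D x) ∧
  (∀ x ∈ D, ∃ E ∈ X, E ⊆ x)

/-- W: the union of all dwAXp's of all instances of the dataset. -/
def dwUnion (T : CTheory) (κ : Set (ℕ × ℕ) → ℕ) (D : Set (Set (ℕ × ℕ))) :
    Set (Set (ℕ × ℕ)) :=
  {E | ∃ x ∈ D, E ∈ Ldw T κ D x}

/-- The two defining conditions of an irrefutable envelope (before maximality):
a set of dwAXp's none of which conflicts with any dwAXp. -/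
def IrrCandidate (T : CTheory) (κ : Set (ℕ × ℕ) → ℕ) (D : Set (Set (ℕ × ℕ)))
    (X : Set (Set (ℕ × ℕ))) : Prop :=
  X ⊆ dwUnion T κ D ∧
  ∀ E ∈ X, ¬ ∃ E' ∈ dwUnion T κ D, ¬ CoherentSet κ D {E, E'}

/-- An irrefutable envelope under (D, κ): a subset-maximal set of mutually
irrefutable dwAXp's. -/
def IsIrrefutableEnvelope (T : CTheory) (κ : Set (ℕ × ℕ) → ℕ)
    (D : Set (Set (ℕ × ℕ))) (X : Set (Set (ℕ × ℕ))) : Prop :=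
  IrrCandidate T κ D X ∧ ∀ X', IrrCandidate T κ D X' → ¬ X ⊂ X'

/-- A coherent explainer: on every question, it returns the members of a fixed
envelope (the union of its outputs over the dataset) included in the instance. -/
def IsCoherentExplainer (L : Explainer) : Prop :=
  ∀ T κ D x, IsQuestion T κ D x →
    L T κ D x = {E | (∃ z ∈ D, E ∈ L T κ D z) ∧ E ⊆ x} ∧
    IsEnvelope T κ D {E | ∃ z ∈ D, E ∈ L T κ D z}

/-!
Success and irreducibility come from minimality: an instance is a weak explanation of itself and has
finitely many subsets, so a minimal weak explanation exists, and no literal of a minimal one can be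
removed.

All five violations occur over two binary features `0` and `1`, with class the value of feature `0`,
at the instances `x₀ = {(0, 0), (1, 0)}` and `x₁ = {(0, 1), (1, 1)}`. On the dataset `{x₀}` the only
concise explanation of `x₀` is `∅`, although `{(0, 0)}` forces the class on the whole feature space.
On `{x₀, x₁}` every singleton contained in `x₀` or `x₁` is a concise explanation of it and `∅` is
not, so enlarging the dataset both loses and creates explanations, and `{(0, 0)}`, `{(1, 1)}` are
consistent explanations of instances of different classes.
-/

section Instances

variable {T : CTheory} {x y : Set (ℕ × ℕ)}

theorem finite_setOf_isLiteral (T : CTheory) : {l | IsLiteral T l}.Finite :=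
  (T.F ×ˢ T.F.biUnion T.dom).finite_toSet.subset fun l ⟨hfeature, hvalue⟩ ↦
    Finset.mem_coe.2 <| Finset.mem_product.2
      ⟨hfeature, Finset.mem_biUnion.2 ⟨l.1, hfeature, hvalue⟩⟩

theorem IsPartialAssignment.finite (hx : IsPartialAssignment T x) : x.Finite :=
  (finite_setOf_isLiteral T).subset hx.1

theorem IsInstance.eq_of_subset (hx : IsInstance T x) (hy : IsPartialAssignment T y)
    (hxy : x ⊆ y) : x = y := by
  refine hxy.antisymm ?_
  rintro ⟨f, v⟩ hv
  obtain ⟨w, hw⟩ := hx.2 f (hy.1 _ hv).1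
  obtain rfl : v = w := hy.2 _ hv _ (hxy hw) rfl
  exact hw

end Instances

section StrongVariants

variable {L : Explainer}

theorem Irreducibility.strongIrreducibility (hL : Irreducibility L) : StrongIrreducibility L := by
  intro T κ D x hQ E hE l hl
  obtain ⟨y, hyD, hy⟩ := hL T κ D x hQ E hE l hl
  exact ⟨y, hQ.2.1 hyD, hy⟩

theorem Completeness.strongCompleteness (hL : Completeness L) : StrongCompleteness L := by
  intro T κ D x hQ E hEx hE
  obtain ⟨y, hyD, hy⟩ := hL T κ D x hQ E hEx hE
  exact ⟨y, hQ.2.1 hyD, hy⟩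

end StrongVariants

section Explanations

variable {T : CTheory} {κ : Set (ℕ × ℕ) → ℕ} {D : Set (Set (ℕ × ℕ))} {x E : Set (ℕ × ℕ)}

theorem notMem_Ldw_iff (hE : E ⊆ x) : E ∉ Ldw T κ D x ↔ ∃ y ∈ D, κ y ≠ κ x ∧ E ⊆ y := by
  simp only [Ldw, Set.mem_ofPred_eq, hE, true_and, not_forall, exists_prop, ne_eq]
  exact exists_congr fun _ ↦ and_congr_right fun _ ↦ and_comm

theorem IsQuestion.self_mem_Ldw (hQ : IsQuestion T κ D x) : x ∈ Ldw T κ D x := by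
  refine ⟨subset_rfl, fun y hyD hxy ↦ ?_⟩
  have hx : IsInstance T x := hQ.2.1 hQ.2.2
  have hy : IsInstance T y := hQ.2.1 hyD
  rw [hx.eq_of_subset hy.1 hxy]

theorem mem_Ldc_iff_minimal : E ∈ Ldc T κ D x ↔ Minimal (· ∈ Ldw T κ D x) E := by
  simp only [minimal_subset_iff, Ldc, Set.mem_ofPred_eq, eq_comm]

theorem exists_mem_Ldc_subset (hx : x.Finite) (hE : E ∈ Ldw T κ D x) :
    ∃ E' ∈ Ldc T κ D x, E' ⊆ E := by
  have hfinite : (Ldw T κ D x).Finite := hx.finite_subsets.subset fun _ h ↦ h.1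
  obtain ⟨E', hE'E, hmin⟩ := hfinite.exists_le_minimal hE
  exact ⟨E', mem_Ldc_iff_minimal.2 hmin, hE'E⟩

theorem Ldc_eq_singleton_empty (h : ∅ ∈ Ldw T κ D x) : Ldc T κ D x = {∅} := by
  ext E
  rw [mem_Ldc_iff_minimal, Set.mem_singleton_iff]
  exact minimal_iff_eq h fun _ _ ↦ Set.empty_subset _

theorem Ldc_singleton_self : Ldc T κ {x} x = {∅} :=
  Ldc_eq_singleton_empty ⟨Set.empty_subset x, fun _ hy _ ↦ congrArg κ hy⟩

theorem singleton_mem_Ldc {l : ℕ × ℕ} (hl : {l} ∈ Ldw T κ D x) (h : ∅ ∉ Ldw T κ D x) :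
    {l} ∈ Ldc T κ D x := by
  refine ⟨hl, fun E hE hEl ↦ ?_⟩
  rcases Set.subset_singleton_iff_eq.1 hEl with rfl | rfl
  · exact absurd hE h
  · rfl

theorem feasibility_Ldc : Feasibility Ldc := fun _ _ _ _ _ _ hE ↦ hE.1.1

theorem validity_Ldc : Validity Ldc := fun _ _ _ _ _ _ hE ⟨y, hyD, hEy, hne⟩ ↦
  hne (hE.1.2 y hyD hEy)

theorem success_Ldc : Success Ldc := by
  intro T κ D x hQ
  have hx : IsInstance T x := hQ.2.1 hQ.2.2
  obtain ⟨E, hE, -⟩ := exists_mem_Ldc_subset hx.1.finite hQ.self_mem_Ldw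
  exact ⟨E, hE⟩

theorem irreducibility_Ldc : Irreducibility Ldc := by
  intro T κ D x _ E hE l hl
  have hremoved : E \ {l} ∉ Ldw T κ D x :=
    (mem_Ldc_iff_minimal.1 hE).not_prop_of_lt (Set.sdiff_singleton_ssubset.2 hl)
  exact (notMem_Ldw_iff (Set.sdiff_subset.trans hE.1.1)).1 hremoved

end Explanations

section Counterexample

/-- The theory with two binary features `0`, `1` and two classes, over which all the violations
occur. -/
def twoBitTheory : CTheory where
  F := Finset.range 2
  dom _ := Finset.range 2
  dom_nontrivial _ _ := by simp
  C := Finset.range 2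
  C_nontrivial := by simp

open Classical in
/-- The classifier reading off the value of feature `0`: on instances of `twoBitTheory`, the literal
`(0, 0)` is absent exactly when `(0, 1)` is present. -/
noncomputable def firstBit (x : Set (ℕ × ℕ)) : ℕ := if (0, 0) ∈ x then 0 else 1

/-- The instance of `twoBitTheory` giving the same value `a` to both features. -/
def diagonal (a : ℕ) : Set (ℕ × ℕ) := {l | l.1 < 2 ∧ l.2 = a}

/-- The dataset consisting of the two constant instances of `twoBitTheory`. -/
def diagonals : Set (Set (ℕ × ℕ)) := diagonal '' Set.Iio 2

variable {a i : ℕ} {D : Set (Set (ℕ × ℕ))} {x : Set (ℕ × ℕ)}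

theorem diagonal_mem_diagonals (ha : a < 2) : diagonal a ∈ diagonals :=
  Set.mem_image_of_mem diagonal ha

theorem singleton_diagonal_subset_diagonals (ha : a < 2) : {diagonal a} ⊆ diagonals :=
  Set.singleton_subset_iff.2 (diagonal_mem_diagonals ha)

theorem isInstance_diagonal (ha : a < 2) : IsInstance twoBitTheory (diagonal a) := by
  refine ⟨⟨?_, ?_⟩, fun f hf ↦ ⟨a, Finset.mem_range.1 hf, rfl⟩⟩
  · rintro ⟨f, _⟩ ⟨hf, rfl⟩
    exact ⟨Finset.mem_range.2 hf, Finset.mem_range.2 ha⟩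
  · rintro l ⟨-, hl⟩ l' ⟨-, hl'⟩ -
    exact hl.trans hl'.symm

theorem isClassifier_firstBit : IsClassifier twoBitTheory firstBit := by
  intro x _
  unfold firstBit
  split_ifs <;> simp [twoBitTheory]

theorem firstBit_of_mem (hx : (0, 0) ∈ x) : firstBit x = 0 := if_pos hx

theorem firstBit_diagonal (ha : a < 2) : firstBit (diagonal a) = a := by
  interval_cases a <;> simp [firstBit, diagonal]

theorem isQuestion_firstBit (hD : D ⊆ diagonals) (hx : x ∈ D) :
    IsQuestion twoBitTheory firstBit D x := by
  refine ⟨isClassifier_firstBit, fun y hy ↦ ?_, hx⟩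
  obtain ⟨a, ha, rfl⟩ := hD hy
  exact isInstance_diagonal ha

theorem isQuestion_singleton_diagonal (ha : a < 2) :
    IsQuestion twoBitTheory firstBit {diagonal a} (diagonal a) :=
  isQuestion_firstBit (singleton_diagonal_subset_diagonals ha) rfl

theorem isQuestion_diagonals (ha : a < 2) :
    IsQuestion twoBitTheory firstBit diagonals (diagonal a) :=
  isQuestion_firstBit subset_rfl (diagonal_mem_diagonals ha)

theorem empty_notMem_Ldw_diagonals : ∅ ∉ Ldw twoBitTheory firstBit diagonals x := by
  intro h
  have hzero := h.2 _ (diagonal_mem_diagonals zero_lt_two) (Set.empty_subset _)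
  have hone := h.2 _ (diagonal_mem_diagonals one_lt_two) (Set.empty_subset _)
  rw [firstBit_diagonal zero_lt_two] at hzero
  rw [firstBit_diagonal one_lt_two] at hone
  exact zero_ne_one (hzero.trans hone.symm)

theorem singleton_mem_Ldc_diagonals (hi : i < 2) :
    {(i, a)} ∈ Ldc twoBitTheory firstBit diagonals (diagonal a) := by
  refine singleton_mem_Ldc ⟨Set.singleton_subset_iff.2 ⟨hi, rfl⟩, ?_⟩ empty_notMem_Ldw_diagonals
  rintro _ ⟨b, -, rfl⟩ hib
  have hmem : (i, a) ∈ diagonal b := Set.singleton_subset_iff.1 hib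
  rw [show a = b from hmem.2]

theorem not_coherence_Ldc : ¬ Coherence Ldc := by
  intro h
  have hclass : firstBit (diagonal 0) ≠ firstBit (diagonal 1) := by
    rw [firstBit_diagonal zero_lt_two, firstBit_diagonal one_lt_two]
    exact zero_ne_one
  have hconsistent : ConsistentLits ({(0, 0)} ∪ {(1, 1)}) := by simp [ConsistentLits]
  exact h _ _ _ _ _ (isQuestion_diagonals zero_lt_two) (isQuestion_diagonals one_lt_two) hclass
    _ (singleton_mem_Ldc_diagonals zero_lt_two) _ (singleton_mem_Ldc_diagonals one_lt_two)
    hconsistent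

theorem not_strongCompleteness_Ldc : ¬ StrongCompleteness Ldc := by
  intro h
  have hsubset : {(0, 0)} ⊆ diagonal 0 := Set.singleton_subset_iff.2 ⟨zero_lt_two, rfl⟩
  have homitted : {(0, 0)} ∉ Ldc twoBitTheory firstBit {diagonal 0} (diagonal 0) := by
    simp [Ldc_singleton_self]
  obtain ⟨y, -, hy, hne⟩ :=
    h _ _ _ _ (isQuestion_singleton_diagonal zero_lt_two) _ hsubset homitted
  rw [firstBit_of_mem (Set.singleton_subset_iff.1 hy), firstBit_diagonal zero_lt_two] at hne
  exact hne rfl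

theorem not_monotonicity_Ldc : ¬ Monotonicity Ldc := by
  intro h
  have hmono := h _ _ _ _ _ (isQuestion_singleton_diagonal zero_lt_two)
    (isQuestion_diagonals zero_lt_two) (singleton_diagonal_subset_diagonals zero_lt_two)
  rw [Ldc_singleton_self, Set.singleton_subset_iff] at hmono
  exact empty_notMem_Ldw_diagonals hmono.1

theorem not_counterMonotonicity_Ldc : ¬ CounterMonotonicity Ldc := by
  intro h
  have hanti := h _ _ _ _ _ (isQuestion_singleton_diagonal zero_lt_two)
    (isQuestion_diagonals zero_lt_two) (singleton_diagonal_subset_diagonals zero_lt_two)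
  rw [Ldc_singleton_self] at hanti
  exact Set.singleton_ne_empty _ (hanti (singleton_mem_Ldc_diagonals zero_lt_two))

end Counterexample

theorem Ldc_axioms :
    Feasibility Ldc ∧ Validity Ldc ∧ Success Ldc ∧ Irreducibility Ldc ∧
    StrongIrreducibility Ldc ∧
    ¬ Coherence Ldc ∧ ¬ Completeness Ldc ∧ ¬ StrongCompleteness Ldc ∧
    ¬ Monotonicity Ldc ∧ ¬ CounterMonotonicity Ldc :=
  ⟨feasibility_Ldc, validity_Ldc, success_Ldc, irreducibility_Ldc,
    irreducibility_Ldc.strongIrreducibility,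
    not_coherence_Ldc, fun h ↦ not_strongCompleteness_Ldc h.strongCompleteness,
    not_strongCompleteness_Ldc, not_monotonicity_Ldc, not_counterMonotonicity_Ldc⟩
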